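/- Let S = ⟨m, am+1, bm+t⟩ be a MANS-semigroup with embedding dimension 3, where m ≥ 3, a ≥ 1, t ∈ {2, …, m−1}, and (t−1)(am+1) < bm+t < t(am+1). Set q = ⌊(m−1)/t⌋ and r = (m−1) mod t. Then the Frobenius number of S is F(S) = r(am+1) + q(bm+t) − m. -/

import Mathlib

/-- `S ⊆ ℕ` is a numerical semigroup: contains `0`, closed under addition,
and has finite complement in `ℕ`. -/
def IsNumSgp (S : Set ℕ) : Prop :=
  0 ∈ S ∧ (∀ a ∈ S, ∀ b ∈ S, a + b ∈ S) ∧ Sᶜ.Finite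

/-- `⟨A⟩`: the additive submonoid of `ℕ` generated by `A`, viewed as a set. -/
def gen (A : Set ℕ) : Set ℕ := (AddSubmonoid.closure A : Set ℕ)

/-- The multiplicity `m(S)`: the least nonzero element of `S`. -/
noncomputable def nsMult (S : Set ℕ) : ℕ := sInf {x | x ∈ S ∧ x ≠ 0}

/-- The minimal system of generators of `S`: the nonzero elements of `S` that are
not a sum of two nonzero elements of `S`. -/
def msg (S : Set ℕ) : Set ℕ :=
  {x | x ∈ S ∧ x ≠ 0 ∧ ∀ a ∈ S, a ≠ 0 → ∀ b ∈ S, b ≠ 0 → x ≠ a + b}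

/-- The ratio `r(S)`: the second smallest minimal generator of `S`. -/
noncomputable def nsRatio (S : Set ℕ) : ℕ := sInf (msg S \ {nsMult S})

/-- The maximum minimal generator `M(S)`. -/
noncomputable def nsMaxGen (S : Set ℕ) : ℕ := sSup (msg S)

/-- The Apéry set `Ap(S, n) = {s ∈ S : s - n ∉ S}`. -/
def AperySet (S : Set ℕ) (n : ℕ) : Set ℕ :=
  {s | s ∈ S ∧ ¬ ∃ y ∈ S, y + n = s}

/-- `w(i)`: the least element of `S` congruent to `i` modulo `n`. -/
noncomputable def aperyW (S : Set ℕ) (n i : ℕ) : ℕ :=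
  sInf {s | s ∈ S ∧ s % n = i % n}

/-- A MANS-semigroup: a numerical semigroup whose Apéry set with respect to the
multiplicity is monotone, i.e. `w(1) < w(2) < ⋯ < w(m(S) - 1)`. -/
def IsMANS (S : Set ℕ) : Prop :=
  IsNumSgp S ∧ ∀ i : ℕ, 0 < i → i + 1 < nsMult S →
    aperyW S (nsMult S) i < aperyW S (nsMult S) (i + 1)

/-- The Frobenius number `F(S)`: the greatest integer not in `S`. -/
noncomputable def nsFrob (S : Set ℕ) : ℕ := sSup {x | x ∉ S}

/-- The genus `g(S)`: the number of gaps of `S`. -/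
noncomputable def nsGenus (S : Set ℕ) : ℕ := Set.ncard {x | x ∉ S}

/-- The set of pseudo-Frobenius numbers of `S`: integers `x ∉ S` such that
`x + s ∈ S` for every nonzero `s ∈ S`. -/
def nsPF (S : Set ℕ) : Set ℤ :=
  {x : ℤ | x ∉ ((Nat.cast : ℕ → ℤ) '' S) ∧
    ∀ s ∈ S, s ≠ 0 → x + (s : ℤ) ∈ ((Nat.cast : ℕ → ℤ) '' S)}

/-- The type `t(S)`: the number of pseudo-Frobenius numbers of `S`. -/
noncomputable def nsType (S : Set ℕ) : ℕ := (nsPF S).ncard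

/-- `S` is pseudo-symmetric iff `F(S) = 2 g(S) - 2`. -/
def IsPseudoSymmetric (S : Set ℕ) : Prop :=
  (nsFrob S : ℤ) = 2 * (nsGenus S : ℤ) - 2

/-- Kunz coordinate of the residue `i`. -/
def vv (a b t i : ℕ) : ℕ := (i % t) * a + (i / t) * b

theorem vv_step (a b t i : ℕ) (ht : 2 ≤ t) (hb : (t - 1) * a ≤ b) :
    vv a b t i ≤ vv a b t (i + 1) := by
  unfold vv
  obtain ⟨d, k, hk, hi⟩ : ∃ d k, k < t ∧ i = k + t * d :=
    ⟨i / t, i % t, Nat.mod_lt _ (by omega), (Nat.mod_add_div i t).symm⟩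
  subst hi
  have hpos : 0 < t := by omega
  by_cases h : k + 1 < t
  · have e : k + t * d + 1 = (k + 1) + t * d := by ring
    rw [e, Nat.add_mul_mod_self_left, Nat.add_mul_mod_self_left, Nat.add_mul_div_left _ _ hpos,
      Nat.add_mul_div_left _ _ hpos, Nat.mod_eq_of_lt hk, Nat.mod_eq_of_lt h,
      Nat.div_eq_of_lt hk, Nat.div_eq_of_lt h]
    nlinarith
  · have hkt : k = t - 1 := by omega
    have e : k + t * d + 1 = 0 + t * (d + 1) := by
      rw [mul_add]; omega
    rw [e, Nat.add_mul_mod_self_left, Nat.add_mul_mod_self_left, Nat.add_mul_div_left _ _ hpos,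
      Nat.add_mul_div_left _ _ hpos, Nat.mod_eq_of_lt hk,
      Nat.div_eq_of_lt hk, hkt]
    simp only [Nat.zero_mod, Nat.zero_div]
    nlinarith

theorem vv_mono (a b t : ℕ) (ht : 2 ≤ t) (hb : (t - 1) * a ≤ b) : Monotone (vv a b t) :=
  monotone_nat_of_le_succ fun i => vv_step a b t i ht hb

theorem vv_le (a b t i j : ℕ) (ht : 2 ≤ t) (hb : b ≤ t * a) :
    vv a b t (i + t * j) ≤ i * a + j * b := by
  unfold vv
  rw [Nat.add_mul_mod_self_left, Nat.add_mul_div_left _ _ (by omega)]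
  have h := Nat.mod_add_div i t
  have h2 : (i / t) * b ≤ (i / t) * (t * a) := Nat.mul_le_mul_left _ hb
  have h3 : i * a = (i % t) * a + (i / t) * (t * a) := by
    conv_lhs => rw [← h]
    ring
  rw [h3, add_mul]
  omega

theorem mem_gen3 (x y z n : ℕ) :
    n ∈ gen {x, y, z} ↔ ∃ u i j : ℕ, n = u * x + i * y + j * z := by
  unfold gen
  rw [SetLike.mem_coe]
  constructor
  · intro h
    induction h using AddSubmonoid.closure_induction with
    | mem w hw =>
      rcases hw with rfl | rfl | rfl
      · exact ⟨1, 0, 0, by ring⟩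
      · exact ⟨0, 1, 0, by ring⟩
      · exact ⟨0, 0, 1, by ring⟩
    | zero => exact ⟨0, 0, 0, by ring⟩
    | add p q _ _ hp hq =>
      obtain ⟨u, i, j, rfl⟩ := hp
      obtain ⟨u', i', j', rfl⟩ := hq
      exact ⟨u + u', i + i', j + j', by ring⟩
  · rintro ⟨u, i, j, rfl⟩
    have hx : x ∈ AddSubmonoid.closure ({x, y, z} : Set ℕ) :=
      AddSubmonoid.subset_closure (by simp)
    have hy : y ∈ AddSubmonoid.closure ({x, y, z} : Set ℕ) :=
      AddSubmonoid.subset_closure (by simp)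
    have hz : z ∈ AddSubmonoid.closure ({x, y, z} : Set ℕ) :=
      AddSubmonoid.subset_closure (by simp)
    exact add_mem (add_mem (AddSubmonoid.nsmul_mem _ hx u) (AddSubmonoid.nsmul_mem _ hy i))
      (AddSubmonoid.nsmul_mem _ hz j)

theorem stmt10 (m a b t q r : ℕ) (hm : 3 ≤ m) (ha : 1 ≤ a) (ht2 : 2 ≤ t) (htm : t ≤ m - 1)
    (h1 : (t - 1) * (a * m + 1) < b * m + t) (h2 : b * m + t < t * (a * m + 1))
    (hq : q = (m - 1) / t) (hr : r = (m - 1) % t) :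
    (nsFrob (gen {m, a * m + 1, b * m + t}) : ℤ) =
      (r : ℤ) * (a * m + 1) + (q : ℤ) * (b * m + t) - m := by
  have hb1 : (t - 1) * a ≤ b := by
    by_contra hc
    have h3 : (b + 1) * m ≤ (t - 1) * a * m := Nat.mul_le_mul_right _ (by omega)
    have h4 : (t - 1) * (a * m + 1) = (t - 1) * a * m + (t - 1) := by ring
    have h5 : (b + 1) * m = b * m + m := by ring
    omega
  have hb2 : b ≤ t * a := by
    by_contra hc
    have h3 : t * a * m ≤ b * m := Nat.mul_le_mul_right _ (by omega)
    have h4 : t * (a * m + 1) = t * a * m + t := by ring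
    omega
  have hmono := vv_mono a b t ht2 hb1
  have hv1 : 1 ≤ vv a b t (m - 1) := by
    have h := hmono (show 1 ≤ m - 1 by omega)
    have h' : vv a b t 1 = a := by
      unfold vv
      rw [Nat.mod_eq_of_lt (by omega), Nat.div_eq_of_lt (by omega)]
      ring
    omega
  obtain ⟨V, hV⟩ : ∃ V, vv a b t (m - 1) = V + 1 := ⟨vv a b t (m - 1) - 1, by omega⟩
  have hF : nsFrob (gen {m, a * m + 1, b * m + t}) = V * m + (m - 1) := by
    unfold nsFrob
    apply IsGreatest.csSup_eq
    constructor
    · intro hmem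
      rw [mem_gen3] at hmem
      obtain ⟨u, i, j, h⟩ := hmem
      have e : u * m + i * (a * m + 1) + j * (b * m + t)
          = (u + i * a + j * b) * m + (i + t * j) := by ring
      rw [e] at h
      have hle : m - 1 ≤ i + t * j := by
        by_contra hc
        have hmod := congrArg (· % m) h
        simp only [Nat.mul_add_mod_self_right] at hmod
        rw [Nat.mod_eq_of_lt (by omega), Nat.mod_eq_of_lt (by omega)] at hmod
        omega
      have h6 := (hmono hle).trans (vv_le a b t i j ht2 hb2)
      have h7 : (V + 1) * m ≤ (u + i * a + j * b) * m := Nat.mul_le_mul_right _ (by omega)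
      rw [add_mul] at h7
      omega
    · intro n hn
      by_contra hc
      apply hn
      rw [mem_gen3]
      have hlt : n % m < m := Nat.mod_lt _ (by omega)
      have hnm := Nat.mod_add_div n m
      have hk : V + 1 ≤ n / m := by
        by_contra hk
        have : m * (n / m) ≤ m * V := Nat.mul_le_mul_left _ (by omega)
        have e : V * m = m * V := by ring
        omega
      have h8 := hmono (show n % m ≤ m - 1 by omega)
      obtain ⟨u, hu⟩ := Nat.exists_eq_add_of_le (show vv a b t (n % m) ≤ n / m by omega)
      refine ⟨u, n % m % t, n % m / t, ?_⟩
      have h9 := Nat.mod_add_div (n % m) t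
      unfold vv at hu
      generalize n % m % t = i at *
      generalize n % m / t = j at *
      rw [← hnm, hu, ← h9]
      ring
  rw [hF]
  have h9 := Nat.mod_add_div (m - 1) t
  unfold vv at hV
  rw [← hq, ← hr] at h9 hV
  obtain ⟨p, rfl⟩ : ∃ p, m = p + 1 := ⟨m - 1, by omega⟩
  simp only [Nat.add_sub_cancel] at h9 ⊢
  have hV' : (r : ℤ) * a + q * b = V + 1 := by exact_mod_cast hV
  have h9' : (r : ℤ) + t * q = p := by exact_mod_cast h9
  push_cast
  linear_combination (-(p : ℤ) - 1) * hV' - h9'
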